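/- Every zero of the polynomial P_m(z), whose generating function is ∑_{m≥0} P_m(z) t^m = 1/(t^4 z^2 + t^3(-2z-36) + t^2(49-2z) - 14t + 1), is a real number lying in the open interval (-∞, -9/4). -/

import Mathlib

open Polynomial

/-! Put `z = (u ^ 2 - 1) * (u ^ 2 - 4)`: the characteristic roots of the recurrence become
`(1 + u) ^ 2`. For real `z < -9 / 4` the four values of `u` are `± u` and `± conj u`, with `u` on
the hyperbola `re (u ^ 2) = 5 / 2`, and `z = 4 - |u| ^ 4`. Up to a positive factor, `P m` is then
the imaginary part of the sum of a dominant term coming from `u` and a recessive term coming from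
`-u`. As `u` runs along the hyperbola from its vertex to infinity, the argument of the dominant
term runs continuously from `0` to `(m / 2 + 3 / 4) * π`, so that the term is purely imaginary,
with alternating signs, at `⌊m / 2⌋ + 1` points. Hence `P m`, whose degree is at most `⌊m / 2⌋`,
has `⌊m / 2⌋` distinct real zeros below `-9 / 4`, and no others. -/

section LinearRecurrence

/-- The solution of a linear recurrence of order `d` whose first `d` values are `0, …, 0, 1`: its
generating function is `t ^ (d - 1)` over the reversed characteristic polynomial. -/
def IsImpulseResponse {R : Type*} [CommSemiring R] (E : LinearRecurrence R) (u : ℕ → R) : Prop :=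
  E.IsSolution u ∧ ∀ k < E.order, u k = if k + 1 = E.order then 1 else 0

lemma IsImpulseResponse.map {R S : Type*} [CommSemiring R] [CommSemiring S]
    {E : LinearRecurrence R} {u : ℕ → R} (hu : IsImpulseResponse E u) (f : R →+* S) :
    IsImpulseResponse ⟨E.order, f ∘ E.coeffs⟩ (f ∘ u) :=
  ⟨fun n => by simp [hu.1 n], fun k hk => by simp [hu.2 k hk, apply_ite f]⟩

lemma eq_nodal_of_monic {R ι : Type*} [CommRing R] [IsDomain R] {p : R[X]} {s : Finset ι}
    {r : ι → R} (hp : p.Monic) (hdeg : p.degree = s.card) (hr : Set.InjOn r s)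
    (hroot : ∀ i ∈ s, p.IsRoot (r i)) : p = Lagrange.nodal s r :=
  eq_of_degree_le_of_eval_index_eq s hr hdeg.le (hdeg.trans Lagrange.degree_nodal.symm)
    (hp.leadingCoeff.trans Lagrange.nodal_monic.leadingCoeff.symm)
    fun i hi => (hroot i hi).trans (Lagrange.eval_nodal_at_node hi).symm

lemma IsImpulseResponse.eq_sum_pow_div_derivative {K ι : Type*} [Field K] [Fintype ι]
    {E : LinearRecurrence K} {r : ι → K} {u : ℕ → K} (hu : IsImpulseResponse E u)
    (hcard : Fintype.card ι = E.order) (hr : r.Injective)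
    (hroot : ∀ i, E.charPoly.IsRoot (r i)) (n : ℕ) :
    u n = ∑ i, r i ^ n / E.charPoly.derivative.eval (r i) := by
  classical
  set v : ℕ → K := fun n => ∑ i, r i ^ n / E.charPoly.derivative.eval (r i) with hv
  have hsol : E.IsSolution v := by
    have hpow (i : ι) : (fun n => r i ^ n) ∈ E.solSpace :=
      (E.geom_sol_iff_root_charPoly _).2 (hroot i)
    have hsum : ∑ i, (E.charPoly.derivative.eval (r i))⁻¹ • (fun n => r i ^ n) ∈ E.solSpace :=
      Submodule.sum_mem _ fun i _ => Submodule.smul_mem _ _ (hpow i)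
    convert! hsum using 1
    funext n
    simp [hv, div_eq_inv_mul]
  have hinit (k : ℕ) (hk : k < E.order) : v k = if k + 1 = E.order then 1 else 0 := by
    have hlt : (X ^ k : K[X]).degree < (Finset.univ : Finset ι).card := by
      rw [degree_X_pow, Finset.card_univ, hcard]
      exact_mod_cast hk
    have hderiv (i : ι) : E.charPoly.derivative.eval (r i)
        = ∏ j ∈ Finset.univ.erase i, (r i - r j) := by
      rw [eq_nodal_of_monic E.charPoly_monic (by rw [E.charPoly_degree_eq_order, Finset.card_univ,
          hcard]) hr.injOn fun i _ => hroot i,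
        Lagrange.eval_nodal_derivative_eval_node_eq (Finset.mem_univ i), Lagrange.eval_nodal]
    have hcoeff := Lagrange.coeff_eq_sum hr.injOn hlt
    simp only [eval_pow, eval_X, ← hderiv, coeff_X_pow, Finset.card_univ, hcard] at hcoeff
    rw [← show _ = v k from hcoeff]
    exact if_congr (by lia) rfl rfl
  exact congrFun ((E.eq_iff_eqOn_range_order _ _ hu.1 hsol).2 fun k hk => by
    have hk := Finset.mem_range.1 hk
    rw [hu.2 k hk, hinit k hk]) n

end LinearRecurrence

section Recurrence

variable {R S : Type*} [CommRing R] [CommRing S]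

/-- The recurrence satisfied by `m ↦ P m`, evaluated at `z`. `LinearRecurrence` lists coefficients
from the oldest term on. -/
def queenRecurrence (z : R) : LinearRecurrence R :=
  ⟨4, ![-z ^ 2, 2 * z + 36, 2 * z - 49, 14]⟩

lemma isSolution_queenRecurrence_iff {z : R} {u : ℕ → R} :
    (queenRecurrence z).IsSolution u ↔ ∀ n, u (n + 4) = 14 * u (n + 3) + (2 * z - 49) * u (n + 2)
      + (2 * z + 36) * u (n + 1) - z ^ 2 * u n := by
  refine forall_congr' fun n => Eq.congr_right ?_
  change ∑ i : Fin 4, ![-z ^ 2, 2 * z + 36, 2 * z - 49, 14] i * u (n + i) = _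
  simp only [Fin.sum_univ_four, Matrix.cons_val, Fin.coe_ofNat_eq_mod, Nat.reduceMod, add_zero]
  ring

lemma charPoly_queenRecurrence (z : R) : (queenRecurrence z).charPoly
    = X ^ 4 - (C 14 * X ^ 3 + C (2 * z - 49) * X ^ 2 + C (2 * z + 36) * X - C (z ^ 2)) := by
  change monomial 4 1 - ∑ i : Fin 4, monomial i (![-z ^ 2, 2 * z + 36, 2 * z - 49, 14] i) = _
  simp only [Fin.sum_univ_four, ← C_mul_X_pow_eq_monomial, Matrix.cons_val, Fin.coe_ofNat_eq_mod,
    Nat.reduceMod, map_neg, map_one]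
  ring

lemma isRoot_charPoly_queenRecurrence (u : R) :
    (queenRecurrence ((u ^ 2 - 1) * (u ^ 2 - 4))).charPoly.IsRoot ((1 + u) ^ 2) := by
  simp only [charPoly_queenRecurrence, IsRoot.def, eval_sub, eval_add, eval_mul, eval_pow, eval_X,
    eval_C]
  ring

lemma eval_derivative_charPoly_queenRecurrence (u : R) :
    (queenRecurrence ((u ^ 2 - 1) * (u ^ 2 - 4))).charPoly.derivative.eval ((1 + u) ^ 2)
      = 4 * u * (2 * u ^ 2 - 5) * (2 * u ^ 2 + 4 * u - 1) := by
  simp only [charPoly_queenRecurrence, derivative_sub, derivative_add, derivative_C_mul,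
    derivative_X_pow, derivative_X, derivative_C, eval_sub, eval_add, eval_mul, eval_pow, eval_X,
    eval_C, eval_one, eval_zero, Nat.cast_ofNat, Nat.add_one_sub_one]
  ring

lemma IsImpulseResponse.map_queenRecurrence {z : R} {u : ℕ → R}
    (hu : IsImpulseResponse (queenRecurrence z) u) (f : R →+* S) :
    IsImpulseResponse (queenRecurrence (f z)) (f ∘ u) := by
  have hcoeffs : f ∘ ![-z ^ 2, 2 * z + 36, 2 * z - 49, 14]
      = ![-f z ^ 2, 2 * f z + 36, 2 * f z - 49, 14] := by
    funext i
    fin_cases i <;> simp [map_ofNat]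
  rw [queenRecurrence, ← hcoeffs]
  exact hu.map f

lemma IsImpulseResponse.coeff_queenRecurrence_eq_zero {u : ℕ → R[X]}
    (hu : IsImpulseResponse (queenRecurrence X) u) {n i : ℕ} (h : n < 2 * i + 3) :
    (u n).coeff i = 0 := by
  induction n using Nat.strong_induction_on generalizing i with
  | _ n ih =>
    rcases lt_or_ge n 4 with hn | hn
    · rw [hu.2 n hn]
      split_ifs with h4
      · exact coeff_one.trans (if_neg (by change n + 1 = 4 at h4; lia))
      · exact coeff_zero i
    · obtain ⟨n, rfl⟩ := Nat.exists_eq_add_of_le' hn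
      have hrec : u (n + 4) = C 14 * u (n + 3) + C 2 * (X * u (n + 2)) - C 49 * u (n + 2)
          + C 2 * (X * u (n + 1)) + C 36 * u (n + 1) - X ^ 2 * u n := by
        rw [isSolution_queenRecurrence_iff.1 hu.1 n]
        simp only [map_ofNat]
        ring
      obtain ⟨i, rfl⟩ : ∃ k, i = k + 1 := ⟨i - 1, by lia⟩
      have hX : (X ^ 2 * u n).coeff (i + 1) = 0 := by
        rw [coeff_X_pow_mul']
        split_ifs with hi
        · exact ih n (by lia) (by lia)
        · rfl
      simp only [hrec, coeff_add, coeff_sub, coeff_C_mul, coeff_X_mul, hX]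
      rw [ih (n + 3) (by lia) (by lia), ih (n + 2) (by lia) (by lia),
        ih (n + 2) (by lia) (by lia), ih (n + 1) (by lia) (by lia), ih (n + 1) (by lia) (by lia)]
      ring

end Recurrence

section RealZeros

lemma exists_mem_of_aeval_eq_zero {R A : Type*} [CommRing R] [IsDomain R] [CommRing A] [IsDomain A]
    [Algebra R A] [FaithfulSMul R A] {p : R[X]} (hp : p ≠ 0) {s : Finset R}
    (hroot : ∀ r ∈ s, p.IsRoot r) (hdeg : p.natDegree ≤ s.card) {w : A} (hw : aeval w p = 0) :
    ∃ r ∈ s, algebraMap R A r = w := by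
  have hle : s.val ≤ p.roots := (Multiset.le_iff_subset s.nodup).2 fun r hr =>
    (mem_roots hp).2 (hroot r hr)
  have hroots : s.val = p.roots :=
    Multiset.eq_of_le_of_card_le hle ((card_roots' p).trans hdeg)
  have hsplits : p.Splits :=
    splits_iff_card_roots.2 ((card_roots' p).antisymm (hdeg.trans (Multiset.card_le_card hle)))
  have hw' : w ∈ p.aroots A := mem_aroots.2 ⟨hp, hw⟩
  rw [aroots, hsplits.roots_map_of_injective (FaithfulSMul.algebraMap_injective R A),
    ← hroots] at hw'
  exact Multiset.mem_map.1 hw'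

lemma exists_strictAnti_zeros_of_alternating {f : ℝ → ℝ} (hf : Continuous f) {k : ℕ}
    {z : Fin (k + 1) → ℝ} (hz : StrictAnti z)
    (hsign : ∀ j : Fin (k + 1), 0 < (-1) ^ (j : ℕ) * f (z j)) :
    ∃ r : Fin k → ℝ, StrictAnti r ∧ ∀ j, r j < z 0 ∧ f (r j) = 0 := by
  have hivt (j : Fin k) : ∃ r, (z j.succ < r ∧ r < z j.castSucc) ∧ f r = 0 := by
    have hl := hsign j.succ
    rw [Fin.val_succ, pow_succ] at hl
    have hr := hsign j.castSucc
    rw [Fin.val_castSucc] at hr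
    obtain ⟨r, hmem, hr0⟩ := intermediate_value_Ioo (hz j.castSucc_lt_succ).le
      (f := fun x => (-1) ^ (j : ℕ) * f x) (by fun_prop)
      (show (0 : ℝ) ∈ _ from ⟨by linarith, hr⟩)
    exact ⟨r, hmem, by simpa using hr0⟩
  choose r hr hr0 using hivt
  exact ⟨r, fun i j hij => (hr j).2.trans_le (hz.antitone (Fin.succ_le_castSucc_iff.2 hij)) |>.trans
    (hr i).1, fun j => ⟨(hr j).2.trans_le (hz.antitone (Fin.zero_le _)), hr0 j⟩⟩

lemma real_zeros_of_alternating {p : ℝ[X]} {k : ℕ} (hdeg : p.natDegree ≤ k)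
    {z : Fin (k + 1) → ℝ} (hz : StrictAnti z)
    (hsign : ∀ j : Fin (k + 1), 0 < (-1) ^ (j : ℕ) * p.eval (z j)) {w : ℂ}
    (hw : aeval w p = 0) : w.im = 0 ∧ w.re < z 0 := by
  have hp : p ≠ 0 := by
    rintro rfl
    simpa using hsign 0
  obtain ⟨r, hr, hroot⟩ := exists_strictAnti_zeros_of_alternating p.continuous hz hsign
  obtain ⟨x, hx, rfl⟩ := exists_mem_of_aeval_eq_zero (s := Finset.univ.map ⟨r, hr.injective⟩) hp
    (by simpa using fun j => (hroot j).2) (by simpa using hdeg) hw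
  obtain ⟨j, rfl⟩ : ∃ j, r j = x := by simpa using hx
  exact ⟨Complex.ofReal_im _, (hroot j).1⟩

variable {α β ι : Type*} [ConditionallyCompleteLinearOrder α] [TopologicalSpace α]
  [OrderTopology α] [DenselyOrdered α] [LinearOrder β] [TopologicalSpace β] [OrderClosedTopology β]
  {f : α → β} {a : α}

lemma exists_isLeast_and_eq (hf : Continuous f) {v : β} (ha : f a < v)
    (hv : ∃ b, a ≤ b ∧ v ≤ f b) : ∃ t, IsLeast {t | a ≤ t ∧ v ≤ f t} t ∧ f t = v := by
  have hclosed : IsClosed {t | a ≤ t ∧ v ≤ f t} :=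
    isClosed_Ici.inter (isClosed_Ici.preimage hf)
  have hleast := hclosed.isLeast_csInf hv ⟨a, fun _ ht => ht.1⟩
  refine ⟨_, hleast, hleast.1.2.antisymm' (not_lt.1 fun hlt => ?_)⟩
  obtain ⟨t, ht, rfl⟩ := intermediate_value_Ioo hleast.1.1 hf.continuousOn ⟨ha, hlt⟩
  exact ht.2.not_ge (hleast.2 ⟨ht.1.le, le_rfl⟩)

lemma exists_strictMono_eq [PartialOrder ι] (hf : Continuous f) {v : ι → β} (hv : StrictMono v)
    (ha : ∀ i, f a < v i) (hreach : ∀ i, ∃ b, a ≤ b ∧ v i ≤ f b) :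
    ∃ t : ι → α, StrictMono t ∧ ∀ i, a < t i ∧ f (t i) = v i := by
  -- Take for `t i` the first time after `a` at which `f` reaches `v i`.
  choose t hleast ht using fun i => exists_isLeast_and_eq hf (ha i) (hreach i)
  refine ⟨t, fun i j hij => ?_, fun i => ⟨(hleast i).1.1.lt_of_ne ?_, ht i⟩⟩
  · refine ((hleast i).2 ⟨(hleast j).1.1, (hv hij).le.trans_eq (ht j).symm⟩).lt_of_ne fun h => ?_
    exact (hv hij).ne (by rw [← ht i, ← ht j, h])
  · intro h
    exact (ha i).ne (h ▸ ht i)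

end RealZeros

section ClosedForm

open Complex ComplexConjugate

lemma spectral_param_eq {u : ℂ} (hu : u.re ^ 2 - u.im ^ 2 = 5 / 2) :
    (u ^ 2 - 1) * (u ^ 2 - 4) = ((4 - normSq u ^ 2 : ℝ) : ℂ) := by
  have hre : (u ^ 2).re = 5 / 2 := by rw [← hu, pow_two, mul_re]; ring
  have hsum : u ^ 2 + conj u ^ 2 = 5 := by
    rw [← map_pow, add_conj, hre]
    norm_num
  push_cast
  rw [normSq_eq_conj_mul_self]
  linear_combination u ^ 2 * hsum

lemma eq_of_one_add_sq_eq {u v : ℂ} (hre : u.re ^ 2 = v.re ^ 2) (h1 : u.re ^ 2 ≠ 1)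
    (h : (1 + u) ^ 2 = (1 + v) ^ 2) : u = v := by
  rcases sq_eq_sq_iff_eq_or_eq_neg.1 h with h | h
  · exact add_left_cancel h
  · have hsum : 1 + u.re = -(1 + v.re) := by simpa using congrArg re h
    rcases sq_eq_sq_iff_eq_or_eq_neg.1 hre with heq | heq
    · exact absurd (by rw [show u.re = -1 by linarith]; norm_num) h1
    · linarith

/-- The contribution of the characteristic root `(1 + u) ^ 2` to `64 i * re u * im u` times the
impulse response of the recurrence with parameter `(u ^ 2 - 1) * (u ^ 2 - 4)`, when that parameter
is real and less than `-9 / 4`. -/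
noncomputable def spectralTerm (n : ℕ) (u : ℂ) : ℂ :=
  (1 + u) ^ (2 * n) / (u * (1 + u.re) * (1 + u.im * I))

lemma spectralTerm_conj (n : ℕ) (u : ℂ) : spectralTerm n (conj u) = conj (spectralTerm n u) := by
  simp [spectralTerm]

lemma pow_div_eval_derivative_eq_spectralTerm {u : ℂ} (hu : u.re ^ 2 - u.im ^ 2 = 5 / 2) (n : ℕ) :
    ((1 + u) ^ 2) ^ n /
        (queenRecurrence ((u ^ 2 - 1) * (u ^ 2 - 4))).charPoly.derivative.eval ((1 + u) ^ 2)
      = spectralTerm n u / (64 * I * u.re * u.im) := by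
  have huC : (u.re : ℂ) ^ 2 - (u.im : ℂ) ^ 2 = 5 / 2 := by
    simpa using congrArg ofReal hu
  have hsq : 2 * u ^ 2 - 5 = 4 * I * u.re * u.im := by
    linear_combination -2 * (u + u.re + u.im * I) * re_add_im u + 2 * huC + 2 * u.im ^ 2 * I_sq
  have hfactor : 2 * u ^ 2 + 4 * u - 1 = 4 * (1 + u.re) * (1 + u.im * I) := by
    linear_combination hsq - 4 * re_add_im u
  rw [eval_derivative_charPoly_queenRecurrence, hsq, hfactor, spectralTerm, div_div, pow_mul]
  congr 1
  ring

lemma injective_neg_conj {u : ℂ} (hre : u.re ≠ 0) (him : u.im ≠ 0) :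
    Function.Injective ![u, -u, conj u, -conj u] := by
  intro i j hij
  have h1 := congrArg re hij
  have h2 := congrArg im hij
  fin_cases i <;> fin_cases j <;> simp [self_eq_neg, neg_eq_self, hre, him] at h1 h2 ⊢

lemma IsImpulseResponse.eq_sum_spectralTerm {u : ℂ} (hu : u.re ^ 2 - u.im ^ 2 = 5 / 2)
    (him : u.im ≠ 0) {p : ℕ → ℂ}
    (hp : IsImpulseResponse (queenRecurrence ((4 - normSq u ^ 2 : ℝ) : ℂ)) p) (n : ℕ) :
    p n = (spectralTerm n u + spectralTerm n (-u) - spectralTerm n (conj u)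
      - spectralTerm n (-conj u)) / (64 * I * u.re * u.im) := by
  have hre : 1 < u.re ^ 2 := by nlinarith [sq_nonneg u.im]
  have hre0 : u.re ≠ 0 := fun h => by norm_num [h] at hre
  set v : Fin 4 → ℂ := ![u, -u, conj u, -conj u] with hv
  have hvre (i : Fin 4) : (v i).re ^ 2 = u.re ^ 2 := by fin_cases i <;> simp [hv]
  have hvim (i : Fin 4) : (v i).im ^ 2 = u.im ^ 2 := by fin_cases i <;> simp [hv]
  have hvu (i : Fin 4) : (v i).re ^ 2 - (v i).im ^ 2 = 5 / 2 := by rw [hvre, hvim, hu]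
  have hparam (i : Fin 4) :
      (v i ^ 2 - 1) * (v i ^ 2 - 4) = ((4 - normSq u ^ 2 : ℝ) : ℂ) := by
    rw [spectral_param_eq (hvu i), normSq_apply, normSq_apply, ← pow_two, ← pow_two, ← pow_two,
      ← pow_two, hvre, hvim]
  have hinj : Function.Injective fun i => (1 + v i) ^ 2 := fun i j hij =>
    injective_neg_conj hre0 him <|
      eq_of_one_add_sq_eq ((hvre i).trans (hvre j).symm) ((hvre i).trans_gt hre).ne' hij
  have hsum := hp.eq_sum_pow_div_derivative (ι := Fin 4) rfl hinj
    (fun i => hparam i ▸ isRoot_charPoly_queenRecurrence (v i)) n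
  have hterm (i : Fin 4) := pow_div_eval_derivative_eq_spectralTerm (hvu i) n
  simp only [hparam] at hterm
  rw [hsum, Fin.sum_univ_four, hterm, hterm, hterm, hterm]
  simp only [hv, Matrix.cons_val, neg_re, neg_im, conj_re, conj_im, ofReal_neg]
  ring

lemma IsImpulseResponse.mul_eq_im_spectralTerm_add {u : ℂ} (hu : u.re ^ 2 - u.im ^ 2 = 5 / 2)
    (him : u.im ≠ 0) {p : ℕ → ℝ}
    (hp : IsImpulseResponse (queenRecurrence (4 - normSq u ^ 2)) p) (n : ℕ) :
    32 * u.re * u.im * p n = (spectralTerm n u).im + (spectralTerm n (-u)).im := by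
  have hre : u.re ≠ 0 := fun h => by nlinarith [sq_nonneg u.im]
  have hsum : (p n : ℂ) = _ := (hp.map_queenRecurrence ofRealHom).eq_sum_spectralTerm hu him n
  rw [eq_div_iff (by simp [hre, him]), ← map_neg, spectralTerm_conj, spectralTerm_conj,
    add_sub_right_comm, add_sub_assoc, sub_conj, sub_conj] at hsum
  have h64 : 64 * (u.re * u.im * p n)
      = 2 * (spectralTerm n u).im + 2 * (spectralTerm n (-u)).im := by
    apply ofReal_injective
    apply mul_right_cancel₀ I_ne_zero
    push_cast at hsum ⊢
    linear_combination hsum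
  linear_combination h64 / 2

end ClosedForm

section Phase

open Complex Filter Topology

/-- A choice of the argument of `spectralTerm n u` that depends continuously on `u` in the right
half-plane. -/
noncomputable def spectralPhase (n : ℕ) (u : ℂ) : ℝ :=
  2 * n * (1 + u).arg - u.arg - (1 + u.im * I).arg

lemma spectralTerm_eq_norm_mul_exp (n : ℕ) {u : ℂ} (hu : -1 ≤ u.re) :
    spectralTerm n u = ‖spectralTerm n u‖ * exp (spectralPhase n u * I) := by
  have hre : ‖(1 + u.re : ℂ)‖ = 1 + u.re := by
    exact_mod_cast Complex.norm_of_nonneg (by linarith : 0 ≤ 1 + u.re)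
  have hphase : exp (spectralPhase n u * I)
      = exp ((1 + u).arg * I) ^ (2 * n) / exp (u.arg * I) / exp ((1 + u.im * I).arg * I) := by
    rw [← exp_nat_mul, ← exp_sub, ← exp_sub, spectralPhase]
    push_cast
    ring_nf
  calc spectralTerm n u
      = (‖1 + u‖ * exp ((1 + u).arg * I)) ^ (2 * n) / (‖u‖ * exp (u.arg * I) * (1 + u.re)
          * (‖1 + u.im * I‖ * exp ((1 + u.im * I).arg * I))) := by
        simp only [norm_mul_exp_arg_mul_I, spectralTerm]
    _ = ‖spectralTerm n u‖ * exp (spectralPhase n u * I) := by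
        rw [hphase, spectralTerm, norm_div, norm_mul, norm_mul, norm_pow, hre]
        push_cast
        simp only [mul_pow, div_eq_mul_inv, mul_inv]
        ring

lemma exp_add_half_mul_pi_mul_I (j : ℕ) :
    exp (((j + 1 / 2) * Real.pi : ℝ) * I) = ((-1) ^ j : ℝ) * I := by
  have hsplit : (((j + 1 / 2) * Real.pi : ℝ) : ℂ) * I = j * (Real.pi * I) + Real.pi / 2 * I := by
    push_cast
    ring
  rw [hsplit, exp_add, exp_nat_mul, exp_pi_mul_I, exp_pi_div_two_mul_I]
  push_cast
  rfl

lemma im_spectralTerm_of_spectralPhase_eq {n j : ℕ} {u : ℂ} (hu : -1 ≤ u.re)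
    (hj : spectralPhase n u = (j + 1 / 2) * Real.pi) :
    (spectralTerm n u).im = (-1) ^ j * ‖spectralTerm n u‖ := by
  have hpolar := spectralTerm_eq_norm_mul_exp n hu
  rw [hj, exp_add_half_mul_pi_mul_I, ← mul_assoc, ← ofReal_mul] at hpolar
  have him := congrArg im hpolar
  rwa [im_ofReal_mul, I_im, mul_one, mul_comm] at him

lemma norm_spectralTerm (n : ℕ) (u : ℂ) : ‖spectralTerm n u‖
    = ((1 + u.re) ^ 2 + u.im ^ 2) ^ n / (‖u‖ * |1 + u.re| * √(1 + u.im ^ 2)) := by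
  have hnum : ‖1 + u‖ ^ 2 = (1 + u.re) ^ 2 + u.im ^ 2 := by
    rw [Complex.sq_norm, normSq_apply, add_re, one_re, add_im, one_im]
    ring
  have hre : ‖(1 + u.re : ℂ)‖ = |1 + u.re| := by
    rw [← ofReal_one, ← ofReal_add, norm_real, Real.norm_eq_abs]
  have him : ‖(1 + u.im * I : ℂ)‖ = √(1 + u.im ^ 2) := by
    simpa using norm_add_mul_I 1 u.im
  rw [spectralTerm, norm_div, norm_mul, norm_mul, norm_pow, pow_mul, hnum, hre, him]

lemma norm_spectralTerm_neg_lt {u : ℂ} (hu : u.re ^ 2 - u.im ^ 2 = 5 / 2) (hre : 0 < u.re)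
    {n : ℕ} (hn : n ≠ 0) : ‖spectralTerm n (-u)‖ < ‖spectralTerm n u‖ := by
  have h1 : 1 < u.re := by nlinarith [sq_nonneg u.im]
  have hu0 : 0 < ‖u‖ := norm_pos_iff.2 fun h => hre.ne' (by simp [h])
  obtain ⟨n, rfl⟩ := Nat.exists_eq_succ_of_ne_zero hn
  have hle : ((1 - u.re) ^ 2 + u.im ^ 2) ^ n ≤ ((1 + u.re) ^ 2 + u.im ^ 2) ^ n := by
    gcongr 1
    linarith
  have hlt : ((1 - u.re) ^ 2 + u.im ^ 2) * (1 + u.re)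
      < ((1 + u.re) ^ 2 + u.im ^ 2) * (u.re - 1) := by
    have hdiff : ((1 + u.re) ^ 2 + u.im ^ 2) * (u.re - 1)
        - ((1 - u.re) ^ 2 + u.im ^ 2) * (1 + u.re) = 3 := by linear_combination 2 * hu
    exact sub_pos.1 (three_pos.trans_eq hdiff.symm)
  have hdiv : ((1 - u.re) ^ 2 + u.im ^ 2) ^ (n + 1) / (u.re - 1)
      < ((1 + u.re) ^ 2 + u.im ^ 2) ^ (n + 1) / (1 + u.re) := by
    rw [div_lt_div_iff₀ (by linarith) (by linarith), pow_succ _ n, pow_succ _ n, mul_assoc,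
      mul_assoc]
    exact mul_lt_mul' hle hlt (by positivity) (by positivity)
  have habs : |1 + (-u).re| = u.re - 1 := by
    rw [neg_re, abs_of_neg (by linarith)]
    ring
  calc ‖spectralTerm (n + 1) (-u)‖
      = ((1 - u.re) ^ 2 + u.im ^ 2) ^ (n + 1) / (u.re - 1) / (‖u‖ * √(1 + u.im ^ 2)) := by
        rw [norm_spectralTerm, habs, norm_neg, neg_re, neg_im, neg_sq, div_div, ← sub_eq_add_neg]
        ring_nf
    _ < ((1 + u.re) ^ 2 + u.im ^ 2) ^ (n + 1) / (1 + u.re) / (‖u‖ * √(1 + u.im ^ 2)) := by gcongr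
    _ = ‖spectralTerm (n + 1) u‖ := by
        rw [norm_spectralTerm, abs_of_pos (by linarith), div_div]
        ring_nf

lemma pos_of_spectralPhase_eq {u : ℂ} (hu : u.re ^ 2 - u.im ^ 2 = 5 / 2) (hre : 0 < u.re)
    (him : 0 < u.im) {p : ℕ → ℝ}
    (hp : IsImpulseResponse (queenRecurrence (4 - normSq u ^ 2)) p) {n j : ℕ} (hn : n ≠ 0)
    (hj : spectralPhase n u = (j + 1 / 2) * Real.pi) : 0 < (-1) ^ j * p n := by
  have hsum := hp.mul_eq_im_spectralTerm_add hu him.ne' n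
  have hneg : |(spectralTerm n (-u)).im| < ‖spectralTerm n u‖ :=
    (abs_im_le_norm _).trans_lt (norm_spectralTerm_neg_lt hu hre hn)
  rw [im_spectralTerm_of_spectralPhase_eq (by linarith) hj] at hsum
  refine pos_of_mul_pos_right (a := 32 * u.re * u.im) ?_ (by positivity)
  rw [abs_lt] at hneg
  rcases neg_one_pow_eq_or ℝ j with h | h <;> rw [h] at hsum ⊢ <;> linarith

lemma arg_eq_arctan {z : ℂ} (hz : 0 < z.re) : z.arg = Real.arctan (z.im / z.re) := by
  have harg := abs_lt.1 (abs_arg_lt_pi_div_two_iff.2 (Or.inl hz))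
  rw [← tan_arg, Real.arctan_tan harg.1 harg.2]

lemma spectralPhase_eq_arctan (n : ℕ) {u : ℂ} (hu : 0 < u.re) : spectralPhase n u
    = 2 * n * Real.arctan (u.im / (1 + u.re)) - Real.arctan (u.im / u.re) - Real.arctan u.im := by
  have hone : 0 < (1 + u).re := by
    rw [add_re, one_re]
    linarith
  rw [spectralPhase, arg_eq_arctan hu, arg_eq_arctan hone, arg_eq_arctan (by simp)]
  simp

/-- The branch `0 < re u` of the hyperbola `re (u ^ 2) = 5 / 2`, parametrized by `im u`. On it,
`(u ^ 2 - 1) * (u ^ 2 - 4)` takes the real values less than or equal to `-9 / 4`. -/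
noncomputable def hyperbolaPoint (y : ℝ) : ℂ := ⟨√(y ^ 2 + 5 / 2), y⟩

lemma hyperbolaPoint_re_pos (y : ℝ) : 0 < (hyperbolaPoint y).re :=
  Real.sqrt_pos.2 (by positivity)

lemma hyperbolaPoint_re_sq_sub_im_sq (y : ℝ) :
    (hyperbolaPoint y).re ^ 2 - (hyperbolaPoint y).im ^ 2 = 5 / 2 := by
  rw [hyperbolaPoint, Real.sq_sqrt (by positivity)]
  ring

lemma normSq_hyperbolaPoint (y : ℝ) : normSq (hyperbolaPoint y) = 2 * y ^ 2 + 5 / 2 := by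
  have him : (hyperbolaPoint y).im = y := rfl
  rw [normSq_apply]
  linear_combination hyperbolaPoint_re_sq_sub_im_sq y + 2 * ((hyperbolaPoint y).im + y) * him

lemma continuous_spectralPhase_hyperbolaPoint (n : ℕ) :
    Continuous fun y => spectralPhase n (hyperbolaPoint y) := by
  have hre := hyperbolaPoint_re_pos
  simp only [spectralPhase_eq_arctan n (hre _)]
  simp only [hyperbolaPoint] at hre ⊢
  fun_prop (disch := intro y; linarith [hre y])

lemma spectralPhase_hyperbolaPoint_zero (n : ℕ) : spectralPhase n (hyperbolaPoint 0) = 0 := by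
  rw [spectralPhase_eq_arctan n (hyperbolaPoint_re_pos 0)]
  simp [hyperbolaPoint]

lemma tendsto_div_add_sqrt_sq_add (c d : ℝ) :
    Tendsto (fun y : ℝ => y / (c + √(y ^ 2 + d))) atTop (𝓝 1) := by
  have hlim : Tendsto (fun y : ℝ => (c * y⁻¹ + √(1 + d * y⁻¹ ^ 2))⁻¹) atTop (𝓝 1) := by
    have hcont : ContinuousAt (fun s : ℝ => (c * s + √(1 + d * s ^ 2))⁻¹) 0 := by
      fun_prop (disch := simp)
    simpa [Function.comp_def] using hcont.tendsto.comp tendsto_inv_atTop_zero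
  refine hlim.congr' ?_
  filter_upwards [eventually_gt_atTop 0] with y hy
  have hsqrt : √(y ^ 2 + d) = y * √(1 + d * y⁻¹ ^ 2) := by
    rw [show y ^ 2 + d = y ^ 2 * (1 + d * y⁻¹ ^ 2) by field_simp, Real.sqrt_mul (by positivity),
      Real.sqrt_sq hy.le]
  rw [hsqrt, show c + y * √(1 + d * y⁻¹ ^ 2) = y * (c * y⁻¹ + √(1 + d * y⁻¹ ^ 2)) by field_simp,
    div_mul_cancel_left₀ hy.ne']

lemma tendsto_spectralPhase_hyperbolaPoint (n : ℕ) :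
    Tendsto (fun y => spectralPhase n (hyperbolaPoint y)) atTop
      (𝓝 (2 * n * (Real.pi / 4) - Real.pi / 4 - Real.pi / 2)) := by
  have harctan (c : ℝ) : Tendsto (fun y : ℝ => Real.arctan (y / (c + √(y ^ 2 + 5 / 2)))) atTop
      (𝓝 (Real.pi / 4)) := by
    rw [← Real.arctan_one]
    exact (Real.continuous_arctan.tendsto 1).comp (tendsto_div_add_sqrt_sq_add c _)
  simp only [spectralPhase_eq_arctan n (hyperbolaPoint_re_pos _)]
  have h0 := harctan 0
  simp only [zero_add] at h0
  exact (((harctan 1).const_mul _).sub h0).sub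
    (Real.tendsto_arctan_atTop.mono_right nhdsWithin_le_nhds)

end Phase

section Zeros

open Filter

lemma exists_spectralPhase_hyperbolaPoint_eq {n k : ℕ} (hk : 2 * k + 3 ≤ n) :
    ∃ y : Fin (k + 1) → ℝ, StrictMono y ∧ ∀ j, 0 < y j ∧
      spectralPhase n (hyperbolaPoint (y j)) = ((j : ℕ) + 1 / 2) * Real.pi := by
  have hmono : StrictMono fun j : Fin (k + 1) => ((j : ℕ) + 1 / 2 : ℝ) * Real.pi := by
    intro i j hij
    dsimp only
    gcongr
    exact hij
  have hlim (j : Fin (k + 1)) : ((j : ℕ) + 1 / 2 : ℝ) * Real.pi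
      < 2 * n * (Real.pi / 4) - Real.pi / 4 - Real.pi / 2 := by
    have hjn : (2 * (j : ℕ) + 3 : ℝ) ≤ n := by exact_mod_cast (by lia : 2 * (j : ℕ) + 3 ≤ n)
    nlinarith [Real.pi_pos]
  refine exists_strictMono_eq (continuous_spectralPhase_hyperbolaPoint n) hmono (fun j => ?_)
    fun j => ?_
  · rw [spectralPhase_hyperbolaPoint_zero]
    positivity
  · obtain ⟨b, hb0, hb⟩ := ((eventually_ge_atTop (0 : ℝ)).and
      ((tendsto_spectralPhase_hyperbolaPoint n).eventually_const_le (hlim j))).exists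
    exact ⟨b, hb0, hb⟩

lemma IsImpulseResponse.im_eq_zero_and_re_lt_of_aeval_eq_zero {Q : ℕ → ℝ[X]}
    (hQ : IsImpulseResponse (queenRecurrence X) Q) (m : ℕ) {w : ℂ} (hw : aeval w (Q (m + 3)) = 0) :
    w.im = 0 ∧ w.re < -9 / 4 := by
  have hdeg : (Q (m + 3)).natDegree ≤ m / 2 :=
    natDegree_le_iff_coeff_eq_zero.2 fun i hi => hQ.coeff_queenRecurrence_eq_zero (by lia)
  obtain ⟨y, hy, hphase⟩ :=
    exists_spectralPhase_hyperbolaPoint_eq (show 2 * (m / 2) + 3 ≤ m + 3 by lia)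
  have hanti : StrictAnti fun j => 4 - (2 * y j ^ 2 + 5 / 2) ^ 2 := fun i j hij => by
    have h0 := (hphase i).1
    have hlt := hy hij
    dsimp only
    gcongr
  have hsign (j : Fin (m / 2 + 1)) :
      0 < (-1) ^ (j : ℕ) * (Q (m + 3)).eval (4 - (2 * y j ^ 2 + 5 / 2) ^ 2) := by
    have heval := hQ.map_queenRecurrence (evalRingHom (4 - (2 * y j ^ 2 + 5 / 2) ^ 2))
    rw [coe_evalRingHom, eval_X, ← normSq_hyperbolaPoint] at heval
    rw [← normSq_hyperbolaPoint]
    exact pos_of_spectralPhase_eq (hyperbolaPoint_re_sq_sub_im_sq _) (hyperbolaPoint_re_pos _)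
      (hphase j).1 heval (by lia) (hphase j).2
  obtain ⟨him, hre⟩ := real_zeros_of_alternating hdeg hanti hsign hw
  refine ⟨him, hre.trans ?_⟩
  nlinarith [sq_pos_of_pos (hphase 0).1]

lemma isImpulseResponse_queenRecurrence_shift {R : Type*} [CommRing R] {z : R} {P : ℤ → R}
    (h0 : P 0 = 1) (hneg : ∀ m : ℤ, m < 0 → P m = 0)
    (hrec : ∀ m : ℤ, 1 ≤ m → P m - 14 * P (m - 1) + (49 - 2 * z) * P (m - 2)
      + (-2 * z - 36) * P (m - 3) + z ^ 2 * P (m - 4) = 0) :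
    IsImpulseResponse (queenRecurrence z) fun n => P (n - 3) := by
  refine ⟨isSolution_queenRecurrence_iff.2 fun n => ?_, fun k hk => ?_⟩
  · have h := hrec (n + 1) (by lia)
    push_cast
    ring_nf at h ⊢
    linear_combination h
  · change k < 4 at hk
    change _ = if k + 1 = 4 then _ else _
    split_ifs with h
    · obtain rfl : k = 3 := by lia
      exact h0
    · exact hneg _ (by lia)

end Zeros

/-- Every zero of the polynomial `P m` (whose generating function is
`∑ P m t^m = 1/(t⁴z² + t³(-2z-36) + t²(49-2z) - 14t + 1)`, i.e. `P 0 = 1`,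
`P m = 0` for `m < 0`, and the four-term recurrence holds) is a real number
lying in the open interval `(-∞, -9/4)`. -/
theorem queen_diagonal_zero_distribution (P : ℤ → Polynomial ℝ)
    (h0 : P 0 = 1)
    (hneg : ∀ m : ℤ, m < 0 → P m = 0)
    (hrec : ∀ m : ℤ, 1 ≤ m →
      P m - 14 * P (m - 1) + (C 49 - 2 * X) * P (m - 2)
        + (-2 * X - 36) * P (m - 3) + X ^ 2 * P (m - 4) = 0) :
    ∀ (m : ℕ) (w : ℂ), aeval w (P m) = 0 → w.im = 0 ∧ w.re < -9/4 := by
  intro m w hw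
  have hQ : IsImpulseResponse (queenRecurrence X) fun n => P (n - 3) :=
    isImpulseResponse_queenRecurrence_shift h0 hneg hrec
  exact hQ.im_eq_zero_and_re_lt_of_aeval_eq_zero m (by simpa using hw)
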